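/- Suppose D is positive definite and let μ be a nonzero real number. Write ı₊(A) and ı₋(A) for the number of positive, respectively negative, eigenvalues (counted with multiplicity) of a Hermitian matrix A. If μ > 0 then ı₊(S(μ)) = ı₊(P(μ)) and ı₋(S(μ)) = ı₋(P(μ)) + r; if μ < 0 then ı₊(S(μ)) = ı₋(P(μ)) + r and ı₋(S(μ)) = ı₊(P(μ)). -/

import Mathlib

open Matrix ComplexOrder

/-- The number of eigenvalues (roots of the characteristic polynomial, counted with algebraic
multiplicity) with positive real part.  For a Hermitian matrix this is the number `ı₊` of
positive eigenvalues counted with multiplicity. -/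
noncomputable def posInertia {m : Type*} [Fintype m] [DecidableEq m]
    (A : Matrix m m ℂ) : ℕ :=
  (A.charpoly.roots.filter fun z => 0 < z.re).card

/-- The number of eigenvalues (roots of the characteristic polynomial, counted with algebraic
multiplicity) with negative real part.  For a Hermitian matrix this is the number `ı₋` of
negative eigenvalues counted with multiplicity. -/
noncomputable def negInertia {m : Type*} [Fintype m] [DecidableEq m]
    (A : Matrix m m ℂ) : ℕ :=
  (A.charpoly.roots.filter fun z => z.re < 0).card

/-!
The Schur complement of the block `-μ • 1` in `S μ` is `μ⁻¹ • P μ`, so by Haynsworth's inertia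
additivity the inertia of `S μ` is that of `μ⁻¹ • P μ` plus that of `-μ • 1`; a scalar factor
preserves or exchanges the two indices according to its sign.

Inertia additivity rests on Sylvester's law of inertia. We get the latter from a variational
description of the positive index of `A`: it is the largest `k` for which some `W` with `k` columns
makes `Wᴴ * A * W` positive definite, and such a `W` for `Eᴴ * A * E` yields `E * W` for `A`.
The index bounds `k` because it equals the rank of the positive part `A⁺`, and `A ≤ A⁺`.
-/

section Inertia

variable {m k : Type*} [Fintype m] [DecidableEq m] [Fintype k] [DecidableEq k]
  {A : Matrix m m ℂ}

lemma posInertia_one : posInertia (1 : Matrix m m ℂ) = Fintype.card m := by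
  rw [posInertia, charpoly_one, ← Polynomial.C_1, Polynomial.roots_pow, Polynomial.roots_X_sub_C]
  simp [Multiset.filter_nsmul, Multiset.filter_singleton]

lemma negInertia_one : negInertia (1 : Matrix m m ℂ) = 0 := by
  rw [negInertia, charpoly_one, ← Polynomial.C_1, Polynomial.roots_pow, Polynomial.roots_X_sub_C]
  simp [Multiset.filter_nsmul]

lemma posInertia_fromBlocks_zero₁₂_zero₂₁ (A : Matrix m m ℂ) (B : Matrix k k ℂ) :
    posInertia (fromBlocks A 0 0 B) = posInertia A + posInertia B := by
  rw [posInertia, charpoly_fromBlocks_zero₁₂, Polynomial.roots_mul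
    (mul_ne_zero A.charpoly_monic.ne_zero B.charpoly_monic.ne_zero), Multiset.filter_add,
    Multiset.card_add, posInertia, posInertia]

lemma negInertia_fromBlocks_zero₁₂_zero₂₁ (A : Matrix m m ℂ) (B : Matrix k k ℂ) :
    negInertia (fromBlocks A 0 0 B) = negInertia A + negInertia B := by
  rw [negInertia, charpoly_fromBlocks_zero₁₂, Polynomial.roots_mul
    (mul_ne_zero A.charpoly_monic.ne_zero B.charpoly_monic.ne_zero), Multiset.filter_add,
    Multiset.card_add, negInertia, negInertia]

lemma posInertia_eq_card (hA : A.IsHermitian) :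
    posInertia A = Fintype.card {i // 0 < hA.eigenvalues i} := by
  simp only [posInertia, hA.roots_charpoly_eq_eigenvalues, Multiset.filter_map,
    Multiset.card_map, Fintype.card_subtype]
  rfl

lemma negInertia_eq_card (hA : A.IsHermitian) :
    negInertia A = Fintype.card {i // hA.eigenvalues i < 0} := by
  simp only [negInertia, hA.roots_charpoly_eq_eigenvalues, Multiset.filter_map,
    Multiset.card_map, Fintype.card_subtype]
  rfl

lemma rank_cfc {𝕜 : Type*} [RCLike 𝕜] {A : Matrix m m 𝕜} (hA : A.IsHermitian) (f : ℝ → ℝ) :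
    (cfc f A).rank = Fintype.card {i // f (hA.eigenvalues i) ≠ 0} := by
  rw [hA.cfc_eq, IsHermitian.cfc, Unitary.conjStarAlgAut_apply, ← Unitary.coe_star]
  simp [-isUnit_iff_ne_zero, -Unitary.coe_star, rank_diagonal]

lemma posInertia_eq_rank_posPart (hA : A.IsHermitian) : posInertia A = A⁺.rank := by
  rw [CFC.posPart_def, cfcₙ_eq_cfc, rank_cfc hA, posInertia_eq_card hA]
  simp only [ne_eq, posPart_eq_zero, not_le]

lemma negInertia_eq_rank_negPart (hA : A.IsHermitian) : negInertia A = A⁻.rank := by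
  rw [CFC.negPart_def, cfcₙ_eq_cfc, rank_cfc hA, negInertia_eq_card hA]
  simp only [ne_eq, negPart_eq_zero, not_le]

lemma posInertia_neg (hA : A.IsHermitian) : posInertia (-A) = negInertia A := by
  rw [posInertia_eq_rank_posPart hA.neg, negInertia_eq_rank_negPart hA, CFC.posPart_neg]

lemma negInertia_neg (hA : A.IsHermitian) : negInertia (-A) = posInertia A := by
  rw [← posInertia_neg hA.neg, neg_neg]

lemma rank_real_smul {m n : Type*} [Fintype n] {c : ℝ} (hc : c ≠ 0) (A : Matrix m n ℂ) :
    (c • A).rank = A.rank := by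
  rw [← Complex.coe_smul]
  exact rank_smul_of_mem_nonZeroDivisors A
    (mem_nonZeroDivisors_of_ne_zero (Complex.ofReal_ne_zero.mpr hc))

lemma posInertia_smul_of_pos (hA : A.IsHermitian) {c : ℝ} (hc : 0 < c) :
    posInertia (c • A) = posInertia A := by
  have hcA : (c • A).IsHermitian := (IsSelfAdjoint.all c).smul hA
  rw [posInertia_eq_rank_posPart hcA, posInertia_eq_rank_posPart hA,
    CFC.posPart_smul_of_nonneg hc.le, rank_real_smul hc.ne']

lemma posInertia_smul_of_neg (hA : A.IsHermitian) {c : ℝ} (hc : c < 0) :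
    posInertia (c • A) = negInertia A := by
  rw [← posInertia_neg hA, ← posInertia_smul_of_pos hA.neg (neg_pos.mpr hc), neg_smul_neg]

lemma negInertia_smul_of_pos (hA : A.IsHermitian) {c : ℝ} (hc : 0 < c) :
    negInertia (c • A) = negInertia A := by
  rw [← posInertia_neg hA, ← posInertia_smul_of_pos hA.neg hc, smul_neg,
    posInertia_neg ((IsSelfAdjoint.all c).smul hA)]

lemma negInertia_smul_of_neg (hA : A.IsHermitian) {c : ℝ} (hc : c < 0) :
    negInertia (c • A) = posInertia A := by
  rw [← negInertia_neg hA, ← negInertia_smul_of_pos hA.neg (neg_pos.mpr hc), neg_smul_neg]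

open MatrixOrder in
lemma card_le_posInertia_of_posDef {l : Type*} [Fintype l] (hA : A.IsHermitian)
    {W : Matrix m l ℂ} (hW : (Wᴴ * A * W).PosDef) : Fintype.card l ≤ posInertia A := by
  classical
  have hpos : (Wᴴ * A⁺ * W).PosDef := by
    have hle : (A⁺ - A).PosSemidef := le_iff.mp (CFC.le_posPart hA)
    simpa only [Matrix.mul_sub, Matrix.sub_mul, add_sub_cancel] using
      hW.add_posSemidef (hle.conjTranspose_mul_mul_same W)
  calc
    Fintype.card l = (Wᴴ * A⁺ * W).rank := (rank_of_isUnit _ hpos.isUnit).symm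
    _ ≤ (Wᴴ * A⁺).rank := rank_mul_le_left _ _
    _ ≤ A⁺.rank := rank_mul_le_right _ _
    _ = posInertia A := (posInertia_eq_rank_posPart hA).symm

lemma exists_posDef_conjTranspose_mul_mul (hA : A.IsHermitian) :
    ∃ W : Matrix m (Fin (posInertia A)) ℂ, (Wᴴ * A * W).PosDef := by
  let e : Fin (posInertia A) ≃ {i // 0 < hA.eigenvalues i} :=
    (Fintype.equivFinOfCardEq (posInertia_eq_card hA).symm).symm
  let U : Matrix m m ℂ := hA.eigenvectorUnitary
  let j : Fin (posInertia A) → m := fun a => e a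
  have hj : Function.Injective j := Subtype.val_injective.comp e.injective
  have hU : Uᴴ * A * U = diagonal (fun i => (hA.eigenvalues i : ℂ)) :=
    (Unitary.conjStarAlgAut_star_apply _ _).symm.trans hA.conjStarAlgAut_star_eigenvectorUnitary
  have hUj : (U.submatrix id j)ᴴ * A * U.submatrix id j =
      diagonal fun a => (hA.eigenvalues (j a) : ℂ) := by
    calc (U.submatrix id j)ᴴ * A * U.submatrix id j = (Uᴴ * A * U).submatrix j j := rfl
      _ = _ := by rw [hU, submatrix_diagonal _ _ hj]; rfl
  refine ⟨U.submatrix id j, hUj ▸ .diagonal fun a => ?_⟩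
  exact_mod_cast (e a).2

lemma posInertia_conjTranspose_mul_mul_le (hA : A.IsHermitian) (E : Matrix m k ℂ) :
    posInertia (Eᴴ * A * E) ≤ posInertia A := by
  obtain ⟨W, hW⟩ := exists_posDef_conjTranspose_mul_mul (isHermitian_conjTranspose_mul_mul E hA)
  have hEW : ((E * W)ᴴ * A * (E * W)).PosDef := by
    simpa only [conjTranspose_mul, Matrix.mul_assoc] using hW
  simpa only [Fintype.card_fin] using card_le_posInertia_of_posDef hA hEW

lemma posInertia_conjTranspose_mul_mul (hA : A.IsHermitian) {E : Matrix m m ℂ} (hE : IsUnit E) :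
    posInertia (Eᴴ * A * E) = posInertia A := by
  obtain ⟨F, hEF⟩ := hE.exists_right_inv
  have hA_eq : Fᴴ * (Eᴴ * A * E) * F = A := by
    calc Fᴴ * (Eᴴ * A * E) * F = (E * F)ᴴ * A * (E * F) := by
          simp only [conjTranspose_mul, Matrix.mul_assoc]
      _ = A := by rw [hEF, conjTranspose_one, Matrix.one_mul, Matrix.mul_one]
  refine (posInertia_conjTranspose_mul_mul_le hA E).antisymm ?_
  simpa only [hA_eq] using
    posInertia_conjTranspose_mul_mul_le (isHermitian_conjTranspose_mul_mul E hA) F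

lemma negInertia_conjTranspose_mul_mul (hA : A.IsHermitian) {E : Matrix m m ℂ} (hE : IsUnit E) :
    negInertia (Eᴴ * A * E) = negInertia A := by
  rw [← posInertia_neg hA, ← posInertia_conjTranspose_mul_mul hA.neg hE, Matrix.mul_neg,
    Matrix.neg_mul, posInertia_neg (isHermitian_conjTranspose_mul_mul E hA)]

lemma exists_isUnit_fromBlocks_eq_conjTranspose_mul_mul {R : Type*} [CommRing R] [StarRing R]
    (A : Matrix m m R) (B : Matrix m k R) {D : Matrix k k R} (hD : D.IsHermitian)
    (hDu : IsUnit D) :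
    ∃ E : Matrix (m ⊕ k) (m ⊕ k) R, IsUnit E ∧
      fromBlocks A B Bᴴ D = Eᴴ * fromBlocks (A - B * D⁻¹ * Bᴴ) 0 0 D * E := by
  have := hDu.invertible
  refine ⟨fromBlocks 1 0 (D⁻¹ * Bᴴ) 1,
    isUnit_fromBlocks_zero₁₂.mpr ⟨isUnit_one, isUnit_one⟩, ?_⟩
  rw [fromBlocks_conjTranspose, conjTranspose_mul, conjTranspose_conjTranspose, hD.inv.eq,
    conjTranspose_one, conjTranspose_one, conjTranspose_zero, ← invOf_eq_nonsing_inv]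
  exact fromBlocks_eq_of_invertible₂₂ A B Bᴴ D

lemma posInertia_fromBlocks (hA : A.IsHermitian) (B : Matrix m k ℂ) {D : Matrix k k ℂ}
    (hD : D.IsHermitian) (hDu : IsUnit D) :
    posInertia (fromBlocks A B Bᴴ D) = posInertia (A - B * D⁻¹ * Bᴴ) + posInertia D := by
  obtain ⟨E, hE, hEq⟩ := exists_isUnit_fromBlocks_eq_conjTranspose_mul_mul A B hD hDu
  have hSchur : (A - B * D⁻¹ * Bᴴ).IsHermitian :=
    hA.sub (isHermitian_mul_mul_conjTranspose B hD.inv)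
  rw [hEq, posInertia_conjTranspose_mul_mul (hSchur.fromBlocks conjTranspose_zero hD) hE,
    posInertia_fromBlocks_zero₁₂_zero₂₁]

lemma negInertia_fromBlocks (hA : A.IsHermitian) (B : Matrix m k ℂ) {D : Matrix k k ℂ}
    (hD : D.IsHermitian) (hDu : IsUnit D) :
    negInertia (fromBlocks A B Bᴴ D) = negInertia (A - B * D⁻¹ * Bᴴ) + negInertia D := by
  obtain ⟨E, hE, hEq⟩ := exists_isUnit_fromBlocks_eq_conjTranspose_mul_mul A B hD hDu
  have hSchur : (A - B * D⁻¹ * Bᴴ).IsHermitian :=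
    hA.sub (isHermitian_mul_mul_conjTranspose B hD.inv)
  rw [hEq, negInertia_conjTranspose_mul_mul (hSchur.fromBlocks conjTranspose_zero hD) hE,
    negInertia_fromBlocks_zero₁₂_zero₂₁]

end Inertia

section Pencil

variable {n r R K : Type*} [CommRing R] [StarRing R] [Field K] [StarRing K]

/-- The quadratic matrix polynomial `P(λ) = λ²M + λD + GGᴴ`. -/
def quadraticPencil [Fintype r] (M D : Matrix n n R) (G : Matrix n r R) (z : R) : Matrix n n R :=
  z ^ 2 • M + z • D + G * Gᴴ

/-- The linear pencil `S(λ) = λ diag(M, -I) + [[D, G], [Gᴴ, 0]]`, a trimmed linearization of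
`quadraticPencil M D G`. -/
def linearPencil [DecidableEq r] (M D : Matrix n n R) (G : Matrix n r R) (z : R) :
    Matrix (n ⊕ r) (n ⊕ r) R :=
  z • fromBlocks M 0 0 (-1) + fromBlocks D G Gᴴ 0

lemma isHermitian_quadraticPencil [Fintype r] {M D : Matrix n n R} (hM : M.IsHermitian)
    (hD : D.IsHermitian) (G : Matrix n r R) {z : R} (hz : IsSelfAdjoint z) :
    (quadraticPencil M D G z).IsHermitian :=
  (((hz.pow 2).smul hM).add (hz.smul hD)).add (isHermitian_mul_conjTranspose_self G)

variable [DecidableEq r]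

lemma linearPencil_eq_fromBlocks (M D : Matrix n n R) (G : Matrix n r R) (z : R) :
    linearPencil M D G z = fromBlocks (z • M + D) G Gᴴ (-z • 1) := by
  simp [linearPencil, fromBlocks_smul, fromBlocks_add]

lemma schurComplement_linearPencil [Fintype r] (M D : Matrix n n K) (G : Matrix n r K) {z : K}
    (hz : z ≠ 0) :
    z • M + D - G * (-z • 1 : Matrix r r K)⁻¹ * Gᴴ = z⁻¹ • quadraticPencil M D G z := by
  have hinv : (-z • 1 : Matrix r r K)⁻¹ = -z⁻¹ • 1 :=
    inv_eq_left_inv (by simp [smul_smul, hz])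
  rw [hinv]
  simp [quadraticPencil, smul_add, smul_smul, pow_two, hz]

variable [Fintype n] [DecidableEq n] [Fintype r] {M D : Matrix n n ℂ}

lemma posInertia_linearPencil (hM : M.IsHermitian) (hD : D.IsHermitian) (G : Matrix n r ℂ)
    {μ : ℝ} (hμ : μ ≠ 0) :
    posInertia (linearPencil M D G μ) =
      posInertia (μ⁻¹ • quadraticPencil M D G μ) + posInertia (-μ • 1 : Matrix r r ℂ) := by
  have hμ₀ : (μ : ℂ) ≠ 0 := Complex.ofReal_ne_zero.mpr hμ
  have hμ_real : IsSelfAdjoint (μ : ℂ) := Complex.conj_ofReal μ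
  have hunit : IsUnit (-(μ : ℂ) • 1 : Matrix r r ℂ) :=
    isUnit_one.smul (Units.mk0 (-(μ : ℂ)) (neg_ne_zero.mpr hμ₀))
  rw [linearPencil_eq_fromBlocks, posInertia_fromBlocks ((hμ_real.smul hM).add hD) G
    (hμ_real.neg.smul isHermitian_one) hunit, schurComplement_linearPencil M D G hμ₀]
  norm_cast

lemma negInertia_linearPencil (hM : M.IsHermitian) (hD : D.IsHermitian) (G : Matrix n r ℂ)
    {μ : ℝ} (hμ : μ ≠ 0) :
    negInertia (linearPencil M D G μ) =
      negInertia (μ⁻¹ • quadraticPencil M D G μ) + negInertia (-μ • 1 : Matrix r r ℂ) := by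
  have hμ₀ : (μ : ℂ) ≠ 0 := Complex.ofReal_ne_zero.mpr hμ
  have hμ_real : IsSelfAdjoint (μ : ℂ) := Complex.conj_ofReal μ
  have hunit : IsUnit (-(μ : ℂ) • 1 : Matrix r r ℂ) :=
    isUnit_one.smul (Units.mk0 (-(μ : ℂ)) (neg_ne_zero.mpr hμ₀))
  rw [linearPencil_eq_fromBlocks, negInertia_fromBlocks ((hμ_real.smul hM).add hD) G
    (hμ_real.neg.smul isHermitian_one) hunit, schurComplement_linearPencil M D G hμ₀]
  norm_cast

end Pencil

theorem stmt11_general {n r : Type*} [Fintype n] [DecidableEq n] [Fintype r] [DecidableEq r]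
    {M D : Matrix n n ℂ} (hM : M.IsHermitian) (hD : D.IsHermitian) (G : Matrix n r ℂ)
    (P : ℂ → Matrix n n ℂ) (hP : ∀ z : ℂ, P z = z ^ 2 • M + z • D + G * Gᴴ)
    (S : ℂ → Matrix (n ⊕ r) (n ⊕ r) ℂ)
    (hS : ∀ z : ℂ, S z = z • fromBlocks M 0 0 (-1) + fromBlocks D G Gᴴ 0) (μ : ℝ) :
    (0 < μ →
      posInertia (S (μ : ℂ)) = posInertia (P (μ : ℂ)) ∧
      negInertia (S (μ : ℂ)) = negInertia (P (μ : ℂ)) + Fintype.card r) ∧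
    (μ < 0 →
      posInertia (S (μ : ℂ)) = negInertia (P (μ : ℂ)) + Fintype.card r ∧
      negInertia (S (μ : ℂ)) = posInertia (P (μ : ℂ))) := by
  obtain rfl : P = quadraticPencil M D G := funext hP
  obtain rfl : S = linearPencil M D G := funext hS
  have hPμ := isHermitian_quadraticPencil hM hD G (Complex.conj_ofReal μ)
  have hone : (1 : Matrix r r ℂ).IsHermitian := isHermitian_one
  refine ⟨fun hμ => ?_, fun hμ => ?_⟩
  · have hinv := inv_pos.mpr hμ
    have hneg := neg_lt_zero.mpr hμ
    rw [posInertia_linearPencil hM hD G hμ.ne', negInertia_linearPencil hM hD G hμ.ne',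
      posInertia_smul_of_pos hPμ hinv, negInertia_smul_of_pos hPμ hinv,
      posInertia_smul_of_neg hone hneg, negInertia_smul_of_neg hone hneg,
      posInertia_one, negInertia_one, add_zero]
    exact ⟨rfl, rfl⟩
  · have hinv := inv_lt_zero.mpr hμ
    have hneg := neg_pos.mpr hμ
    rw [posInertia_linearPencil hM hD G hμ.ne, negInertia_linearPencil hM hD G hμ.ne,
      posInertia_smul_of_neg hPμ hinv, negInertia_smul_of_neg hPμ hinv,
      posInertia_smul_of_pos hone hneg, negInertia_smul_of_pos hone hneg,
      posInertia_one, negInertia_one, add_zero]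
    exact ⟨rfl, rfl⟩

/-- For `D` positive definite and nonzero real `μ`:
if `μ > 0` then `ı₊(S(μ)) = ı₊(P(μ))` and `ı₋(S(μ)) = ı₋(P(μ)) + r`; if `μ < 0` then
`ı₊(S(μ)) = ı₋(P(μ)) + r` and `ı₋(S(μ)) = ı₊(P(μ))`. -/
theorem stmt11 {n r : ℕ} (hn : 0 < n) (hr : 0 < r) (hrn : r ≤ n)
    (M D : Matrix (Fin n) (Fin n) ℂ) (hM : M.PosDef) (hD : D.PosDef)
    (G : Matrix (Fin n) (Fin r) ℂ) (hG : G.rank = r)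
    (P : ℂ → Matrix (Fin n) (Fin n) ℂ)
    (hP : ∀ z : ℂ, P z = z ^ 2 • M + z • D + G * Gᴴ)
    (S : ℂ → Matrix (Fin n ⊕ Fin r) (Fin n ⊕ Fin r) ℂ)
    (hS : ∀ z : ℂ, S z = z • Matrix.fromBlocks M 0 0 (-1) + Matrix.fromBlocks D G Gᴴ 0)
    (μ : ℝ) (hμ : μ ≠ 0) :
    (0 < μ →
      posInertia (S (μ : ℂ)) = posInertia (P (μ : ℂ)) ∧
      negInertia (S (μ : ℂ)) = negInertia (P (μ : ℂ)) + r) ∧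
    (μ < 0 →
      posInertia (S (μ : ℂ)) = negInertia (P (μ : ℂ)) + r ∧
      negInertia (S (μ : ℂ)) = posInertia (P (μ : ℂ))) := by
  simpa only [Fintype.card_fin] using
    stmt11_general hM.isHermitian hD.isHermitian G P hP S hS μ
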